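/- arXiv:1507.08473 — 2 statements merged into one kernel-verified Lean document; each statement's English description precedes it below -/
import Mathlib

section
/- For i = 1,…,n, let Vᵢ be an mᵢ×mᵢ real symmetric positive definite matrix and Λᵢ an mᵢ×q real matrix. Suppose Ω* := Σᵢ ΛᵢᵀVᵢ⁻¹Λᵢ is invertible. Then the q×q matrix Σᵢ ΛᵢᵀVᵢΛᵢ − (Σᵢ ΛᵢᵀΛᵢ) Ω*⁻¹ (Σᵢ ΛᵢᵀΛᵢ) is positive semidefinite. -/
open Matrix

/-!
For positive definite `V`, the Gram matrix of the columns of `V * X` and `Y` under the form `V⁻¹`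
has blocks `Xᴴ V X`, `Xᴴ Y`, `Yᴴ X`, `Yᴴ V⁻¹ Y` and is positive semidefinite. Summing over `i`
preserves this, and the matrix in question (where `X = Y = Λ`) is the Schur complement of the last
block of the sum, which is positive definite because it is positive semidefinite and invertible.
-/

section BlockGram

variable {ι p q : Type*}

theorem sum_fromBlocks {l m n o α : Type*} [AddCommMonoid α] (s : Finset ι)
    (A : ι → Matrix n l α) (B : ι → Matrix n m α) (C : ι → Matrix o l α)
    (D : ι → Matrix o m α) :
    ∑ i ∈ s, fromBlocks (A i) (B i) (C i) (D i) =
      fromBlocks (∑ i ∈ s, A i) (∑ i ∈ s, B i) (∑ i ∈ s, C i) (∑ i ∈ s, D i) := by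
  ext (_ | _) (_ | _) <;> simp [Matrix.sum_apply]

theorem posSemidef_fromBlocks_gram {m K : Type*} [Fintype m] [DecidableEq m] [Finite p] [Finite q]
    [Field K] [PartialOrder K] [StarRing K]
    {V : Matrix m m K} (hV : V.PosDef) (X : Matrix m p K) (Y : Matrix m q K) :
    (fromBlocks (Xᴴ * V * X) (Xᴴ * Y) (Yᴴ * X) (Yᴴ * V⁻¹ * Y)).PosSemidef := by
  have hdet : IsUnit V.det := V.isUnit_iff_isUnit_det.mp hV.isUnit
  have gram_eq : (fromCols (V * X) Y)ᴴ * V⁻¹ * fromCols (V * X) Y =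
      fromBlocks (Xᴴ * V * X) (Xᴴ * Y) (Yᴴ * X) (Yᴴ * V⁻¹ * Y) := by
    simp only [conjTranspose_fromCols_eq_fromRows_conjTranspose, fromRows_mul, mul_fromCols,
      fromCols_fromRows_eq_fromBlocks, conjTranspose_mul, hV.isHermitian.eq, Matrix.mul_assoc,
      mul_nonsing_inv_cancel_left _ _ hdet, nonsing_inv_mul_cancel_left _ _ hdet]
  rw [← gram_eq]
  exact hV.inv.posSemidef.conjTranspose_mul_mul_same _

open scoped ComplexOrder

variable {𝕜 : Type*} [RCLike 𝕜] [Finite p] [Fintype q] [DecidableEq q]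

theorem posSemidef_schurComplement_of_posSemidef_fromBlocks
    {A : Matrix p p 𝕜} {B : Matrix p q 𝕜} {D : Matrix q q 𝕜}
    (h : (fromBlocks A B Bᴴ D).PosSemidef) (hD : IsUnit D) :
    (A - B * D⁻¹ * Bᴴ).PosSemidef := by
  have hD_psd : D.PosSemidef := h.submatrix Sum.inr
  have hD_pd : D.PosDef := hD_psd.posDef_iff_isUnit.mpr hD
  have := hD.invertible
  exact (PosDef.fromBlocks₂₂ A B hD_pd).mp h

theorem stmt3_general {m : ι → Type*}
    [∀ i, Fintype (m i)] [∀ i, DecidableEq (m i)] (s : Finset ι)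
    {V : ∀ i, Matrix (m i) (m i) 𝕜} (hV : ∀ i ∈ s, (V i).PosDef)
    (X : ∀ i, Matrix (m i) p 𝕜) (Y : ∀ i, Matrix (m i) q 𝕜)
    (hΩ : IsUnit (∑ i ∈ s, (Y i)ᴴ * (V i)⁻¹ * Y i)) :
    (∑ i ∈ s, (X i)ᴴ * V i * X i -
      (∑ i ∈ s, (X i)ᴴ * Y i) * (∑ i ∈ s, (Y i)ᴴ * (V i)⁻¹ * Y i)⁻¹ *
        (∑ i ∈ s, (Y i)ᴴ * X i)).PosSemidef := by
  have gram_psd := posSemidef_sum s fun i hi => posSemidef_fromBlocks_gram (hV i hi) (X i) (Y i)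
  have cross_adjoint : (∑ i ∈ s, (X i)ᴴ * Y i)ᴴ = ∑ i ∈ s, (Y i)ᴴ * X i := by
    simp only [conjTranspose_sum, conjTranspose_mul, conjTranspose_conjTranspose]
  rw [sum_fromBlocks, ← cross_adjoint] at gram_psd
  rw [← cross_adjoint]
  exact posSemidef_schurComplement_of_posSemidef_fromBlocks gram_psd hΩ

end BlockGram

/-- Matrix Cauchy–Schwarz inequality behind Corollary 1: with `Vᵢ` symmetric
positive definite and `Ω* = Σ ΛᵢᵀVᵢ⁻¹Λᵢ` invertible, the matrix
`Σ ΛᵢᵀVᵢΛᵢ − (Σ ΛᵢᵀΛᵢ) Ω*⁻¹ (Σ ΛᵢᵀΛᵢ)` is positive semidefinite. -/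
theorem stmt3 {n q : ℕ} (m : Fin n → ℕ)
    (V : ∀ i, Matrix (Fin (m i)) (Fin (m i)) ℝ)
    (Λ : ∀ i, Matrix (Fin (m i)) (Fin q) ℝ)
    (hV : ∀ i, (V i).PosDef)
    (hΩ : IsUnit (∑ i, (Λ i)ᵀ * (V i)⁻¹ * Λ i).det) :
    (∑ i, (Λ i)ᵀ * V i * Λ i -
      (∑ i, (Λ i)ᵀ * Λ i) * (∑ i, (Λ i)ᵀ * (V i)⁻¹ * Λ i)⁻¹ *
        (∑ i, (Λ i)ᵀ * Λ i)).PosSemidef := by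
  simp only [← conjTranspose_eq_transpose_of_trivial] at hΩ ⊢
  exact stmt3_general _ (fun i _ => hV i) Λ Λ ((isUnit_iff_isUnit_det _).mpr hΩ)
end

section
/- For i = 1,…,n, let Vᵢ be an mᵢ×mᵢ real symmetric positive definite matrix and Λᵢ an mᵢ×q real matrix. Set Ω₀ := Σᵢ ΛᵢᵀΛᵢ, Ω₁ := Σᵢ ΛᵢᵀVᵢΛᵢ, and Ω* := Σᵢ ΛᵢᵀVᵢ⁻¹Λᵢ, and suppose Ω₀ and Ω* are invertible. Then Ω₀⁻¹Ω₁Ω₀⁻¹ − Ω*⁻¹ is positive semidefinite. -/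
open Matrix

/-!
The matrices `Aᵢ = Ω₀⁻¹Λᵢᵀ` satisfy `∑ AᵢΛᵢ = 1`, so `∑ AᵢYᵢ` is a linear unbiased estimator with
covariance `∑ AᵢVᵢAᵢᵀ = Ω₀⁻¹Ω₁Ω₀⁻¹`. By the Gauss–Markov–Aitken theorem the smallest such covariance
is `Ω*⁻¹`, attained at `Bᵢ = Ω*⁻¹ΛᵢᵀVᵢ⁻¹`: since `BᵢVᵢ = Ω*⁻¹Λᵢᵀ`, the cross terms in
`∑ (Aᵢ - Bᵢ)Vᵢ(Aᵢ - Bᵢ)ᵀ` depend on `A` only through `∑ AᵢΛᵢ = 1`, and the sum collapses to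
`∑ AᵢVᵢAᵢᵀ - Ω*⁻¹`.
-/

theorem sub_mul_mul_conjTranspose_sub_mul_inv {R m n p : Type*} [CommRing R] [StarRing R]
    [Fintype m] [DecidableEq m] [Fintype n] {V : Matrix m m R} (hV : V.IsHermitian)
    (hVdet : IsUnit V.det) (A : Matrix p m R) (Λ : Matrix m n R) (G : Matrix p n R) :
    (A - G * Λᴴ * V⁻¹) * V * (A - G * Λᴴ * V⁻¹)ᴴ =
      A * V * Aᴴ - A * Λ * Gᴴ - G * (A * Λ)ᴴ + G * (Λᴴ * V⁻¹ * Λ) * Gᴴ := by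
  have conjTranspose_sub_eq : (A - G * Λᴴ * V⁻¹)ᴴ = Aᴴ - V⁻¹ * (Λ * Gᴴ) := by
    simp only [conjTranspose_sub, conjTranspose_mul, conjTranspose_conjTranspose, hV.inv.eq]
  rw [conjTranspose_sub_eq]
  simp only [Matrix.sub_mul, Matrix.mul_sub, Matrix.mul_assoc, conjTranspose_mul,
    mul_nonsing_inv_cancel_left _ _ hVdet, nonsing_inv_mul_cancel_left _ _ hVdet]
  abel

section BlockFamily

variable {ι p : Type*} {m : ι → Type*} [Fintype ι] [∀ i, Fintype (m i)]

theorem posDef_sum_conjTranspose_mul_mul {R : Type*} [Ring R] [PartialOrder R] [StarRing R]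
    [AddLeftMono R] [Fintype p] {V : ∀ i, Matrix (m i) (m i) R} {Λ : ∀ i, Matrix (m i) p R}
    (hV : ∀ i, (V i).PosDef) (hΛ : ∀ v, (∀ i, Λ i *ᵥ v = 0) → v = 0) :
    (∑ i, (Λ i)ᴴ * V i * Λ i).PosDef := by
  have posSemidef_term (i) : ((Λ i)ᴴ * V i * Λ i).PosSemidef :=
    (hV i).posSemidef.conjTranspose_mul_mul_same (Λ i)
  refine .of_dotProduct_mulVec_pos
    (posSemidef_sum _ fun i _ ↦ posSemidef_term i).isHermitian fun v hv ↦ ?_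
  obtain ⟨i, hi⟩ : ∃ i, Λ i *ᵥ v ≠ 0 := by
    by_contra! h
    exact hv (hΛ v h)
  have pos_term : 0 < star v ⬝ᵥ (((Λ i)ᴴ * V i * Λ i) *ᵥ v) := by
    simpa only [star_mulVec, dotProduct_mulVec, vecMul_vecMul] using
      (hV i).dotProduct_mulVec_pos hi
  rw [sum_mulVec, dotProduct_sum]
  exact pos_term.trans_le <| Finset.single_le_sum
    (fun j _ ↦ (posSemidef_term j).dotProduct_mulVec_nonneg v) (Finset.mem_univ i)

variable {K : Type*} [Field K] [PartialOrder K] [StarRing K] [AddLeftMono K]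
  [DecidableEq p] [∀ i, DecidableEq (m i)]
  {V : ∀ i, Matrix (m i) (m i) K} {A : ∀ i, Matrix p (m i) K} {Λ : ∀ i, Matrix (m i) p K}

theorem posDef_sum_conjTranspose_mul_inv_mul_of_sum_mul_eq_one [Finite p]
    (hV : ∀ i, (V i).PosDef) (hAΛ : ∑ i, A i * Λ i = 1) :
    (∑ i, (Λ i)ᴴ * (V i)⁻¹ * Λ i).PosDef := by
  have := Fintype.ofFinite p
  refine posDef_sum_conjTranspose_mul_mul (fun i ↦ (hV i).inv) fun v hv ↦ ?_
  calc v = (∑ i, A i * Λ i) *ᵥ v := by rw [hAΛ, one_mulVec]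
    _ = ∑ i, A i *ᵥ (Λ i *ᵥ v) := by simp only [sum_mulVec, mulVec_mulVec]
    _ = 0 := by simp only [hv, mulVec_zero, Finset.sum_const_zero]

variable [Fintype p]

/-- The Gauss–Markov–Aitken theorem: `hAΛ` says that `A` is a linear unbiased estimator in the model
with design matrices `Λ i` and error covariances `V i`. -/
theorem posSemidef_sum_mul_mul_conjTranspose_sub_inv (hV : ∀ i, (V i).PosDef)
    (hAΛ : ∑ i, A i * Λ i = 1) :
    (∑ i, A i * V i * (A i)ᴴ - (∑ i, (Λ i)ᴴ * (V i)⁻¹ * Λ i)⁻¹).PosSemidef := by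
  have hΩ := posDef_sum_conjTranspose_mul_inv_mul_of_sum_mul_eq_one hV hAΛ
  set Ω := ∑ i, (Λ i)ᴴ * (V i)⁻¹ * Λ i with hΩ_def
  have hΩdet : IsUnit Ω.det := (isUnit_iff_isUnit_det _).mp hΩ.isUnit
  have hVdet (i) : IsUnit (V i).det := (isUnit_iff_isUnit_det _).mp (hV i).isUnit
  have sum_sq_eq : ∑ i, A i * V i * (A i)ᴴ - Ω⁻¹ =
      ∑ i, (A i - Ω⁻¹ * (Λ i)ᴴ * (V i)⁻¹) * V i * (A i - Ω⁻¹ * (Λ i)ᴴ * (V i)⁻¹)ᴴ := by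
    symm
    calc
      _ = ∑ i, A i * V i * (A i)ᴴ - (∑ i, A i * Λ i) * (Ω⁻¹)ᴴ - Ω⁻¹ * (∑ i, A i * Λ i)ᴴ +
            Ω⁻¹ * Ω * (Ω⁻¹)ᴴ := by
        simp only [sub_mul_mul_conjTranspose_sub_mul_inv (hV _).isHermitian (hVdet _),
          Finset.sum_add_distrib, Finset.sum_sub_distrib, ← Matrix.sum_mul, ← Matrix.mul_sum,
          ← conjTranspose_sum, ← hΩ_def]
      _ = ∑ i, A i * V i * (A i)ᴴ - Ω⁻¹ := by
        rw [hAΛ, conjTranspose_one, hΩ.isHermitian.inv.eq, nonsing_inv_mul _ hΩdet,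
          Matrix.one_mul, Matrix.mul_one, sub_add_cancel]
  rw [sum_sq_eq]
  exact posSemidef_sum _ fun i _ ↦ (hV i).posSemidef.mul_mul_conjTranspose_same _

theorem stmt4_general (hV : ∀ i, (V i).PosDef) (hΩ₀ : IsUnit (∑ i, (Λ i)ᴴ * Λ i).det) :
    ((∑ i, (Λ i)ᴴ * Λ i)⁻¹ * (∑ i, (Λ i)ᴴ * V i * Λ i) * (∑ i, (Λ i)ᴴ * Λ i)⁻¹ -
      (∑ i, (Λ i)ᴴ * (V i)⁻¹ * Λ i)⁻¹).PosSemidef := by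
  set Ω₀ := ∑ i, (Λ i)ᴴ * Λ i with hΩ₀_def
  have isHermitian_Ω₀ : Ω₀.IsHermitian := by
    simp only [IsHermitian, hΩ₀_def, conjTranspose_sum, (isHermitian_conjTranspose_mul_self _).eq]
  have unbiased : ∑ i, Ω₀⁻¹ * (Λ i)ᴴ * Λ i = 1 := by
    simp only [Matrix.mul_assoc, ← Matrix.mul_sum, ← hΩ₀_def, nonsing_inv_mul _ hΩ₀]
  have covariance_eq : ∑ i, Ω₀⁻¹ * (Λ i)ᴴ * V i * (Ω₀⁻¹ * (Λ i)ᴴ)ᴴ =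
      Ω₀⁻¹ * (∑ i, (Λ i)ᴴ * V i * Λ i) * Ω₀⁻¹ := by
    simp only [conjTranspose_mul, conjTranspose_conjTranspose, isHermitian_Ω₀.inv.eq,
      Matrix.mul_sum, Matrix.sum_mul, Matrix.mul_assoc]
  rw [← covariance_eq]
  exact posSemidef_sum_mul_mul_conjTranspose_sub_inv hV unbiased

end BlockFamily

/-- Finite-sample statement behind Corollary 1: the unweighted sandwich
covariance `Ω₀⁻¹Ω₁Ω₀⁻¹` dominates the optimally weighted covariance `Ω*⁻¹`
in the positive semidefinite order. -/
theorem stmt4 {n q : ℕ} (m : Fin n → ℕ)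
    (V : ∀ i, Matrix (Fin (m i)) (Fin (m i)) ℝ)
    (Λ : ∀ i, Matrix (Fin (m i)) (Fin q) ℝ)
    (hV : ∀ i, (V i).PosDef)
    (hΩ₀ : IsUnit (∑ i, (Λ i)ᵀ * Λ i).det)
    (hΩstar : IsUnit (∑ i, (Λ i)ᵀ * (V i)⁻¹ * Λ i).det) :
    ((∑ i, (Λ i)ᵀ * Λ i)⁻¹ * (∑ i, (Λ i)ᵀ * V i * Λ i) * (∑ i, (Λ i)ᵀ * Λ i)⁻¹ -
      (∑ i, (Λ i)ᵀ * (V i)⁻¹ * Λ i)⁻¹).PosSemidef := by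
  simp only [← conjTranspose_eq_transpose_of_trivial] at hΩ₀ ⊢
  exact stmt4_general hV hΩ₀
end
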